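/- arXiv:1601.05491 — 2 statements merged into one kernel-verified Lean document; each statement's English description precedes it below -/
import Mathlib

section
/- Let p be a positive nonsquare integer and let m, n be positive integers satisfying n² − p·m² = 1 and p²·m⁴ > 4·p·m² + 4. Then √p = (n/m) · Σ_{k=0}^{∞} ((1/4)_k (3/4)_k / (k! (3/2)_k)) · (−4·(p·m² + 1)/(p²·m⁴))^k, where the series on the right converges. -/
/-!
The series is the classical evaluation `₂F₁(1/4, 3/4; 3/2; z) = √(2 / (1 + √(1 - z)))`, here at a
negative `z = -t²`, where `t = 2n / (p m²)`. It is obtained from the complex binomial series: the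
coefficient of `z ^ k` is `2 * choose (1/2) (2k+1)` (`choose_half_odd`), so that the hypergeometric
series, multiplied by `t / 2`, is the imaginary part of `∑ choose (1/2) j * (t i) ^ j`, that is, of
the principal square root of `1 + t i` (`hasSum_im_sqrt`). The extra hypothesis says `t < 1`, which
is convergence.

The Pell equation makes this square root explicit: with `s = √p * m`, so that `n² = s² + 1`, one has
`((n + i) / s)² = (n² - 1 + 2 n i) / s² = 1 + t i`. Its imaginary part is `1 / s`, so the series sums
to `2 / (t s) = s / n = √p * m / n`.
-/


/-- The shifted factorial (Pochhammer symbol): `(x)_0 = 1` and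
`(x)_n = x * (x+1) * ... * (x+n-1)`. -/
noncomputable def shiftedFactorial (x : ℝ) (n : ℕ) : ℝ :=
  ∏ i ∈ Finset.range n, (x + i)

theorem choose_succ_mul (a : ℝ) (n : ℕ) :
    Ring.choose a (n + 1) * (n + 1) = Ring.choose a n * (a - n) := by
  have h : (n.factorial : ℝ) ≠ 0 := by positivity
  simp only [Ring.choose_eq_smul, descPochhammer_succ_right, Polynomial.smeval_mul,
    Polynomial.smeval_sub, Polynomial.smeval_X, Polynomial.smeval_natCast, Nat.factorial_succ,
    smul_eq_mul, Nat.cast_mul, Nat.cast_succ]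
  field_simp
  simp

theorem choose_half_odd (k : ℕ) :
    2 * Ring.choose (1 / 2 : ℝ) (2 * k + 1) = shiftedFactorial (1/4) k * shiftedFactorial (3/4) k /
      ((Nat.factorial k : ℝ) * shiftedFactorial (3/2) k) := by
  induction k with
  | zero => simp [shiftedFactorial]
  | succ k ih =>
    have h1 := choose_succ_mul (1 / 2) (2 * k + 1)
    have h2 := choose_succ_mul (1 / 2) (2 * k + 2)
    have hq : shiftedFactorial (3/2) k ≠ 0 := by
      unfold shiftedFactorial
      exact Finset.prod_ne_zero_iff.2 fun i _ => by positivity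
    have hf : (k.factorial : ℝ) ≠ 0 := by positivity
    have step : ∀ x : ℝ, shiftedFactorial x (k + 1) = shiftedFactorial x k * (x + k) := fun x =>
      Finset.prod_range_succ _ _
    rw [step, step, step, Nat.factorial_succ, show 2 * (k + 1) + 1 = 2 * k + 2 + 1 by ring]
    push_cast at h1 h2 ⊢
    rw [eq_div_iff (by positivity)] at ih
    have hk : (3 / 2 + k : ℝ) ≠ 0 := by positivity
    have hk' : (k + 1 : ℝ) ≠ 0 := by positivity
    have e1 : Ring.choose (1 / 2 : ℝ) (2 * k + 2) =
        Ring.choose (1 / 2 : ℝ) (2 * k + 1) * (1 / 2 - (2 * k + 1)) / (2 * k + 2) := by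
      rw [eq_div_iff (by positivity), ← h1]; ring
    have e2 : Ring.choose (1 / 2 : ℝ) (2 * k + 2 + 1) =
        Ring.choose (1 / 2 : ℝ) (2 * k + 2) * (1 / 2 - (2 * k + 2)) / (2 * k + 3) := by
      rw [eq_div_iff (by positivity), ← h2]; ring
    rw [e2, e1, eq_div_iff (by positivity)]
    have h3 : (2 * k + 3 : ℝ) ≠ 0 := by positivity
    field_simp
    linear_combination 8 * (2 * k + 3) * (4 * k + 1) * (4 * k + 3) * ih

/-- The imaginary part of the binomial series at `t i`, whose sum is the principal square root `w`
of `1 + t i`; only the odd powers contribute. -/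
theorem hasSum_im_sqrt (t : ℝ) (ht : |t| < 1) (w : ℂ) (hw : 0 < w.re)
    (hsq : w ^ 2 = 1 + t * Complex.I) :
    HasSum (fun k : ℕ => Ring.choose (1 / 2 : ℝ) (2 * k + 1) * (t * (-t ^ 2) ^ k)) w.im := by
  have hmem : (t * Complex.I : ℂ) ∈ Metric.eball (0 : ℂ) 1 := by
    rw [← ENNReal.ofReal_one, Metric.eball_ofReal]
    simpa using ht
  have h := (Complex.one_add_cpow_hasFPowerSeriesOnBall_zero (a := ((1 / 2 : ℝ) : ℂ))).hasSum hmem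
  have hr : (1 + (0 + t * Complex.I) : ℂ) ^ (((1 / 2 : ℝ) : ℂ)) = w := by
    rw [zero_add, ← hsq]
    convert Complex.sq_cpow_two_inv hw using 2
    norm_num
  simp only [hr, binomialSeries_apply, ← Complex.ofReal_choose, List.ofFn_const,
    List.prod_replicate, smul_eq_mul] at h
  have h' := Complex.hasSum_im h
  have hinj : Function.Injective (fun k : ℕ => 2 * k + 1) := fun a b hab => by
    simpa using hab
  rw [← hinj.hasSum_iff] at h'
  · convert h' using 2 with k
    have : (t * Complex.I : ℂ) ^ (2 * k + 1) = ((t * (-t ^ 2) ^ k : ℝ) : ℂ) * Complex.I := by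
      rw [pow_succ, pow_mul, mul_pow, Complex.I_sq]
      push_cast
      ring
    simp only [Function.comp, this, Complex.im_ofReal_mul, Complex.I_im, mul_one]
  · intro j hj
    obtain ⟨k, rfl | rfl⟩ := Nat.even_or_odd' j
    · have : (t * Complex.I : ℂ) ^ (2 * k) = (((-t ^ 2) ^ k : ℝ) : ℂ) := by
        rw [pow_mul, mul_pow, Complex.I_sq]
        push_cast
        ring
      rw [this, ← Complex.ofReal_mul, Complex.ofReal_im]
    · exact absurd ⟨k, rfl⟩ hj

theorem sqrt_series_2F1_neg (p m n : ℕ) (hp : 0 < p) (hps : ¬ IsSquare p)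
    (hm : 0 < m) (hn : 0 < n) (hpell : (n : ℤ) ^ 2 - p * m ^ 2 = 1)
    (hextra : (p : ℤ) ^ 2 * m ^ 4 > 4 * p * m ^ 2 + 4) :
    Summable (fun k : ℕ => shiftedFactorial (1/4) k * shiftedFactorial (3/4) k / ((Nat.factorial k : ℝ) * shiftedFactorial (3/2) k) * (-(4 * (p * m ^ 2 + 1) / (p ^ 2 * m ^ 4)) : ℝ) ^ k) ∧
    Real.sqrt p = (n / m : ℝ) *
      ∑' k : ℕ, shiftedFactorial (1/4) k * shiftedFactorial (3/4) k / ((Nat.factorial k : ℝ) * shiftedFactorial (3/2) k) * (-(4 * (p * m ^ 2 + 1) / (p ^ 2 * m ^ 4)) : ℝ) ^ k := by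
  have hpell' : (n : ℝ) ^ 2 = p * m ^ 2 + 1 := by
    have : (n : ℝ) ^ 2 - p * m ^ 2 = 1 := by exact_mod_cast hpell
    linarith
  have hextra' : (4 * p * m ^ 2 + 4 : ℝ) < p ^ 2 * m ^ 4 := by exact_mod_cast hextra
  have hp' : (0 : ℝ) < p := by exact_mod_cast hp
  have hm' : (0 : ℝ) < m := by exact_mod_cast hm
  have hn' : (0 : ℝ) < n := by exact_mod_cast hn
  have hsp : 0 < Real.sqrt p := Real.sqrt_pos.2 hp'
  have hsp2 : Real.sqrt p ^ 2 = p := Real.sq_sqrt hp'.le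
  set r := Real.sqrt p
  obtain ⟨t, ht⟩ : ∃ t : ℝ, t = 2 * n / (p * m ^ 2) := ⟨_, rfl⟩
  have ht0 : 0 < t := by rw [ht]; positivity
  have hz : -(4 * (p * m ^ 2 + 1) / (p ^ 2 * m ^ 4)) = -t ^ 2 := by
    rw [ht, ← hpell']
    field_simp
    ring
  have ht1 : |t| < 1 := by
    rw [abs_of_pos ht0, ht, div_lt_one (by positivity)]
    refine lt_of_pow_lt_pow_left₀ 2 (by positivity) ?_
    rw [mul_pow, hpell']
    linarith
  -- The principal square root `(n + i) / (√p * m)` of `1 + t i`.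
  have hsq : (⟨n / (r * m), 1 / (r * m)⟩ : ℂ) ^ 2 = 1 + t * Complex.I := by
    apply Complex.ext
    · simp [pow_two]
      field_simp
      rw [hpell', hsp2]
      ring
    · simp [pow_two]
      rw [ht]
      field_simp
      rw [hsp2]
      ring
  have h := (hasSum_im_sqrt t ht1 _ (by simp only; positivity) hsq).mul_left (2 / t)
  have h2 : HasSum (fun k : ℕ => shiftedFactorial (1/4) k * shiftedFactorial (3/4) k /
      ((Nat.factorial k : ℝ) * shiftedFactorial (3/2) k) * (-t ^ 2) ^ k)
      (2 / t * (1 / (r * m))) := by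
    refine Eq.subst (motive := fun f => HasSum f _) (funext fun k => ?_) h
    rw [← choose_half_odd]
    field_simp
  rw [hz]
  refine ⟨h2.summable, ?_⟩
  rw [h2.tsum_eq, ht]
  field_simp
  exact hsp2
end

section
/- Let p be a positive nonsquare integer and let m, n be positive integers satisfying n² − p·m² = 1 and 4·p³·m⁶ > 27·(p·m² + 1)². Then √p = (n/m) · Σ_{k=0}^{∞} ((1/2)_k (1/6)_k (5/6)_k / (k! (3/4)_k (5/4)_k)) · (−27·(p·m² + 1)²/(4·p³·m⁶))^k, where the series on the right converges. -/
open Polynomial Finset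

/-! ### Fuss-Catalan numbers and the formal identity -/

/-- The Fuss-Catalan number `r / (3k + r) * C(3k + r, k)`, written in the division-free form
`r (r + 2k + 1) ⋯ (r + 3k - 1) / k!`, which is a polynomial in `r`. -/
noncomputable def fuss : ℕ → ℝ → ℝ
  | 0, _ => 1
  | k + 1, r => r * (∏ i ∈ range k, (r + 2 * k + 3 + i)) / (k + 1).factorial

theorem fuss_add_one_sub (k : ℕ) (r : ℝ) :
    fuss (k + 1) (r + 1) - fuss (k + 1) r = fuss k (r + 3) := by
  cases k with
  | zero => simp [fuss]
  | succ j =>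
    simp only [fuss]
    have h1 : ∏ i ∈ range (j + 1), (r + 1 + 2 * ((j + 1 : ℕ) : ℝ) + 3 + i)
        = (∏ i ∈ range j, (r + 2 * j + 6 + i)) * (r + 3 * j + 6) := by
      rw [prod_range_succ]
      congr 1
      · exact prod_congr rfl fun i _ => by push_cast; ring
      · push_cast; ring
    have h2 : ∏ i ∈ range (j + 1), (r + 2 * ((j + 1 : ℕ) : ℝ) + 3 + i)
        = (∏ i ∈ range j, (r + 2 * j + 6 + i)) * (r + 2 * j + 5) := by
      rw [prod_range_succ']
      congr 1
      · exact prod_congr rfl fun i _ => by push_cast; ring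
      · push_cast; ring
    have h3 : ∏ i ∈ range j, (r + 3 + 2 * (j : ℝ) + 3 + i)
        = ∏ i ∈ range j, (r + 2 * j + 6 + i) :=
      prod_congr rfl fun i _ => by ring
    rw [h1, h2, h3, Nat.factorial_succ (j + 1)]
    have : ((j + 1).factorial : ℝ) ≠ 0 := by positivity
    have h4 : ((j : ℝ) + 2) ≠ 0 := by positivity
    push_cast
    rw [show (j : ℝ) + 1 + 1 = j + 2 by ring]
    field_simp
    ring

/-- The truncation `∑_{k ≤ N} A_k(r) (-X (1 + X)²) ^ k`. -/
noncomputable def fussTrunc (N : ℕ) (r : ℝ) : ℝ[X] :=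
  ∑ k ∈ range (N + 1), C (fuss k r) * (-(X * (1 + X) ^ 2)) ^ k

theorem fussTrunc_zero_right (N : ℕ) : fussTrunc N 0 = 1 := by
  rw [fussTrunc, sum_range_succ']
  simp [fuss]

theorem fussTrunc_succ (N : ℕ) (r : ℝ) :
    fussTrunc (N + 1) (r + 1)
      = fussTrunc (N + 1) r - X * (1 + X) ^ 2 * fussTrunc N (r + 3) := by
  have h : fussTrunc (N + 1) (r + 1) - fussTrunc (N + 1) r
      = -(X * (1 + X) ^ 2) * fussTrunc N (r + 3) := by
    simp only [fussTrunc]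
    rw [← sum_sub_distrib, sum_range_succ', mul_sum]
    simp only [← sub_mul, ← C_sub, fuss_add_one_sub]
    simp only [fuss, sub_self, C_0, zero_mul, add_zero]
    exact sum_congr rfl fun k _ => by ring
  linear_combination h

theorem fussTrunc_nat (N r : ℕ) :
    (X : ℝ[X]) ^ (N + 1) ∣ (1 + X) ^ r * fussTrunc N r - 1 := by
  induction N generalizing r with
  | zero =>
    have : fussTrunc 0 (r : ℝ) = 1 := by simp [fussTrunc, fuss]
    rw [this, mul_one, zero_add, pow_one, X_dvd_iff, coeff_zero_eq_eval_zero]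
    simp
  | succ N ihN =>
    induction r with
    | zero => simp [fussTrunc_zero_right]
    | succ r ihr =>
      obtain ⟨g, hg⟩ := ihN (r + 3)
      obtain ⟨h, hh⟩ := ihr
      refine ⟨(1 + X) * h - g, ?_⟩
      push_cast at hg ⊢
      rw [fussTrunc_succ]
      linear_combination (1 + X) * hh - X * hg

theorem coeff_fussTrunc (N n : ℕ) (r : ℝ) :
    (fussTrunc N r).coeff n
      = ∑ k ∈ range (N + 1), fuss k r * ((-1) ^ k * ((X * (1 + X) ^ 2 : ℝ[X]) ^ k).coeff n) := by
  rw [fussTrunc, finsetSum_coeff]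
  refine sum_congr rfl fun k _ => ?_
  rw [coeff_C_mul, neg_pow, show ((-1 : ℝ[X]) ^ k) = C ((-1) ^ k) by simp, coeff_C_mul]

theorem coeff_fussTrunc_nat {N n : ℕ} (hn : n ≤ N) (r : ℕ) :
    (fussTrunc N r).coeff n = Ring.choose (-(r : ℝ)) n := by
  obtain ⟨g, hg⟩ := fussTrunc_nat N r
  have h1 : (1 + PowerSeries.X : PowerSeries ℝ) ^ r * (fussTrunc N r : PowerSeries ℝ) - 1
      = PowerSeries.X ^ (N + 1) * (g : PowerSeries ℝ) := by
    have := congrArg (fun q : ℝ[X] => (q : PowerSeries ℝ)) hg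
    simpa using this
  have h2 : PowerSeries.binomialSeries ℝ (-(r : ℝ)) * (1 + PowerSeries.X) ^ r = 1 := by
    rw [← PowerSeries.binomialSeries_nat (R := ℝ), ← PowerSeries.binomialSeries_add]
    simp
  have h3 : (fussTrunc N r : PowerSeries ℝ) = PowerSeries.binomialSeries ℝ (-(r : ℝ))
      + PowerSeries.X ^ (N + 1) * (PowerSeries.binomialSeries ℝ (-(r : ℝ)) * (g : PowerSeries ℝ)) := by
    linear_combination (-(fussTrunc N r : PowerSeries ℝ)) * h2
      + PowerSeries.binomialSeries ℝ (-(r : ℝ)) * h1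
  rw [← Polynomial.coeff_coe, h3, map_add, PowerSeries.coeff_X_pow_mul',
    if_neg (by omega)]
  simp

theorem fuss_eq_eval (k : ℕ) : ∃ q : ℝ[X], ∀ r, fuss k r = q.eval r := by
  cases k with
  | zero => exact ⟨1, by simp [fuss]⟩
  | succ k =>
    refine ⟨X * (∏ i ∈ range k, (X + C (2 * k + 3 + i : ℝ))) * C (((k + 1).factorial : ℝ)⁻¹),
      fun r => ?_⟩
    simp only [fuss, eval_mul, eval_X, eval_prod, eval_add, eval_C, div_eq_mul_inv]
    simp only [add_assoc]

theorem choose_neg_eq_eval (n : ℕ) : ∃ q : ℝ[X], ∀ r : ℝ, Ring.choose (-r) n = q.eval r := by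
  refine ⟨C ((n.factorial : ℝ)⁻¹) * (descPochhammer ℝ n).comp (-X), fun r => ?_⟩
  rw [Ring.choose_eq_smul, ← descPochhammer_map (algebraMap ℤ ℝ), eval_mul, eval_C, eval_comp,
    eval_map_algebraMap, aeval_eq_smeval]
  simp

/-- The coefficient of `X ^ n` in `∑ A_k(r) (-X (1 + X)²) ^ k = (1 + X) ^ (-r)`, for real `r`: both
sides are polynomials in `r` that agree at all natural numbers. -/
theorem sum_fuss_mul_coeff (n : ℕ) (r : ℝ) :
    ∑ k ∈ range (n + 1), fuss k r * ((-1) ^ k * ((X * (1 + X) ^ 2 : ℝ[X]) ^ k).coeff n)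
      = Ring.choose (-r) n := by
  choose q hq using fuss_eq_eval
  obtain ⟨s, hs⟩ := choose_neg_eq_eval n
  have key : ∑ k ∈ range (n + 1), q k * C ((-1) ^ k * ((X * (1 + X) ^ 2 : ℝ[X]) ^ k).coeff n)
      = s := by
    refine eq_of_infinite_eval_eq _ _
      ((Set.infinite_range_of_injective (Nat.cast_injective (R := ℝ))).mono ?_)
    rintro _ ⟨j, rfl⟩
    have := coeff_fussTrunc_nat le_rfl j (n := n)
    rw [coeff_fussTrunc, hs] at this
    simp only [Set.mem_ofPred_eq, eval_finsetSum, eval_mul, eval_C, ← hq]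
    exact this
  have := congrArg (eval r) key
  simp only [eval_finsetSum, eval_mul, eval_C, ← hq, ← hs] at this
  exact this

/-! ### The hypergeometric coefficients -/

theorem shiftedFactorial_succ (x : ℝ) (n : ℕ) :
    shiftedFactorial x (n + 1) = shiftedFactorial x n * (x + n) :=
  prod_range_succ _ _

theorem shiftedFactorial_pos {x : ℝ} (hx : 0 < x) (n : ℕ) : 0 < shiftedFactorial x n :=
  prod_pos fun i _ => by positivity

theorem shiftedFactorial_triple (k : ℕ) : shiftedFactorial (1 / 2) (3 * k)
    = 27 ^ k * (shiftedFactorial (1/2) k * shiftedFactorial (1/6) k * shiftedFactorial (5/6) k) := by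
  induction k with
  | zero => simp [shiftedFactorial]
  | succ k ih =>
    rw [show 3 * (k + 1) = 3 * k + 1 + 1 + 1 by ring]
    simp only [shiftedFactorial_succ, ih]
    push_cast
    ring

theorem shiftedFactorial_double (k : ℕ) : shiftedFactorial (3 / 2) (2 * k)
    = 4 ^ k * (shiftedFactorial (3/4) k * shiftedFactorial (5/4) k) := by
  induction k with
  | zero => simp [shiftedFactorial]
  | succ k ih =>
    rw [show 2 * (k + 1) = 2 * k + 1 + 1 by ring]
    simp only [shiftedFactorial_succ, ih]
    push_cast
    ring

theorem fuss_half (k : ℕ) :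
    fuss k (1 / 2) * (k.factorial * shiftedFactorial (3 / 2) (2 * k))
      = shiftedFactorial (1 / 2) (3 * k) := by
  cases k with
  | zero => simp [fuss, shiftedFactorial]
  | succ k =>
    have h1 : shiftedFactorial (1 / 2) (3 * (k + 1))
        = shiftedFactorial (3 / 2) (2 * (k + 1) + k) * (1 / 2) := by
      rw [shiftedFactorial, show 3 * (k + 1) = 2 * (k + 1) + k + 1 by ring, prod_range_succ']
      congr 1
      · exact prod_congr rfl fun i _ => by push_cast; ring
      · simp
    have h2 : shiftedFactorial (3 / 2) (2 * (k + 1) + k) = shiftedFactorial (3 / 2) (2 * (k + 1))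
        * ∏ i ∈ range k, ((1 / 2 : ℝ) + 2 * k + 3 + i) := by
      rw [shiftedFactorial, prod_range_add]
      congr 1
      exact prod_congr rfl fun i _ => by push_cast; ring
    rw [h1, h2, fuss]
    have : ((k + 1).factorial : ℝ) ≠ 0 := by positivity
    field_simp

/-- The coefficient of `z ^ k` in `₃F₂(1/2, 1/6, 5/6; 3/4, 5/4; z)`. -/
noncomputable def hyp (k : ℕ) : ℝ :=
  shiftedFactorial (1/2) k * shiftedFactorial (1/6) k * shiftedFactorial (5/6) k /
    ((Nat.factorial k : ℝ) * shiftedFactorial (3/4) k * shiftedFactorial (5/4) k)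

theorem hyp_pos (k : ℕ) : 0 < hyp k := by
  have h := fun (x : ℝ) (hx : 0 < x) => shiftedFactorial_pos hx k
  have h1 := h (1/2) (by norm_num)
  have h2 := h (1/6) (by norm_num)
  have h3 := h (5/6) (by norm_num)
  have h4 := h (3/4) (by norm_num)
  have h5 := h (5/4) (by norm_num)
  unfold hyp
  positivity

theorem hyp_succ (k : ℕ) : hyp (k + 1)
    = hyp k * ((1/2 + k) * (1/6 + k) * (5/6 + k) / ((k + 1) * (3/4 + k) * (5/4 + k))) := by
  simp only [hyp, shiftedFactorial_succ, Nat.factorial_succ]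
  push_cast
  rw [div_mul_div_comm]
  congr 1 <;> ring

theorem hyp_le_one (k : ℕ) : hyp k ≤ 1 := by
  induction k with
  | zero => simp [hyp, shiftedFactorial]
  | succ k ih =>
    rw [hyp_succ]
    refine mul_le_one₀ ih (by positivity) ?_
    rw [div_le_one (by positivity)]
    have hk : (0 : ℝ) ≤ k := k.cast_nonneg
    gcongr ?_ * ?_ * ?_ <;> linarith

theorem fuss_half_eq (k : ℕ) : fuss k (1 / 2) = hyp k * (27 / 4) ^ k := by
  have h4 := shiftedFactorial_pos (x := 3/4) (by norm_num) k
  have h5 := shiftedFactorial_pos (x := 5/4) (by norm_num) k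
  have h := fuss_half k
  rw [shiftedFactorial_triple, shiftedFactorial_double] at h
  rw [hyp, div_pow]
  field_simp
  linear_combination h

theorem summable_hyp {y : ℝ} (hy : |y| < 1) : Summable fun k => hyp k * y ^ k := by
  refine Summable.of_norm_bounded (g := fun k => |y| ^ k)
    (summable_geometric_of_lt_one (abs_nonneg _) hy) fun k => ?_
  rw [Real.norm_eq_abs, abs_mul, abs_pow, abs_of_pos (hyp_pos k)]
  exact mul_le_of_le_one_left (by positivity) (hyp_le_one k)

/-! ### Rearranging the double series -/

theorem hasSum_coeff_mul_pow (q : ℝ[X]) (t : ℝ) :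
    HasSum (fun n => q.coeff n * t ^ n) (q.eval t) := by
  rw [eval_eq_sum_range]
  refine hasSum_sum_of_ne_finset_zero fun n hn => ?_
  rw [coeff_eq_zero_of_natDegree_lt (by simpa [Nat.lt_succ_iff] using hn), zero_mul]

theorem coeff_pow_nonneg (k n : ℕ) : 0 ≤ ((X * (1 + X) ^ 2 : ℝ[X]) ^ k).coeff n := by
  have : (X * (1 + X) ^ 2 : ℝ[X]) ^ k
      = ((X * (1 + X) ^ 2 : ℕ[X]) ^ k).map (Nat.castRingHom ℝ) := by simp
  rw [this, coeff_map]
  simp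

theorem coeff_pow_eq_zero {k n : ℕ} (h : n < k) :
    ((X * (1 + X) ^ 2 : ℝ[X]) ^ k).coeff n = 0 := by
  rw [mul_pow, coeff_X_pow_mul', if_neg (by omega)]

theorem hasSum_choose {t : ℝ} (ht0 : 0 ≤ t) (ht1 : t < 1) (a : ℝ) :
    HasSum (fun n => Ring.choose a n * t ^ n) ((1 + t) ^ a) := by
  have h := (Real.one_add_rpow_hasFPowerSeriesOnBall_zero (a := a)).hasSum (y := t) (by
    rw [← ENNReal.ofReal_one, Metric.eball_ofReal]
    simpa [abs_of_nonneg ht0] using ht1)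
  simpa [binomialSeries, mul_comm] using h

theorem tsum_hyp {t : ℝ} (ht : 0 ≤ t) (hu : 27 / 4 * (t * (1 + t) ^ 2) < 1) :
    ∑' k, hyp k * (-(27 / 4 * (t * (1 + t) ^ 2))) ^ k = (1 + t) ^ (-(1 / 2) : ℝ) := by
  have ht1 : t < 1 := by nlinarith [mul_nonneg ht ht, mul_nonneg ht (mul_nonneg ht ht)]
  have hu0 : 0 ≤ 27 / 4 * (t * (1 + t) ^ 2) := by positivity
  let c : ℕ → ℕ → ℝ := fun k n => ((X * (1 + X) ^ 2 : ℝ[X]) ^ k).coeff n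
  let F : ℕ → ℕ → ℝ := fun k n => fuss k (1 / 2) * ((-1) ^ k * c k n) * t ^ n
  have hf0 : ∀ k, 0 ≤ fuss k (1 / 2) := fun k => by
    rw [fuss_half_eq]; have := hyp_pos k; positivity
  have hrow : ∀ k, HasSum (fun n => c k n * t ^ n) ((t * (1 + t) ^ 2) ^ k) := fun k => by
    have h := hasSum_coeff_mul_pow ((X * (1 + X) ^ 2 : ℝ[X]) ^ k) t
    rwa [eval_pow, eval_mul, eval_pow, eval_add, eval_X, eval_one] at h
  have hnorm : ∀ k n, ‖F k n‖ = fuss k (1 / 2) * (c k n * t ^ n) := fun k n => by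
    have hc : 0 ≤ c k n := coeff_pow_nonneg k n
    simp only [F, Real.norm_eq_abs, abs_mul, abs_pow, abs_neg, abs_one, one_pow, one_mul,
      abs_of_nonneg hc, abs_of_nonneg (hf0 k), abs_of_nonneg ht]
    ring
  have hsum : Summable (Function.uncurry F) := by
    refine Summable.of_norm ?_
    rw [summable_prod_of_nonneg fun _ => norm_nonneg _]
    simp only [Function.uncurry_apply_pair, hnorm]
    refine ⟨fun k => (hrow k).summable.mul_left _, ?_⟩
    simp only [tsum_mul_left, (hrow _).tsum_eq]
    refine (summable_hyp (y := 27 / 4 * (t * (1 + t) ^ 2)) (by rwa [abs_of_nonneg hu0])).congr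
      fun k => ?_
    rw [fuss_half_eq, mul_pow]
    ring
  have hcomm := hsum.tsum_comm
  have hL : ∀ k, ∑' n, F k n = hyp k * (-(27 / 4 * (t * (1 + t) ^ 2))) ^ k := fun k => by
    have := ((hrow k).mul_left (fuss k (1 / 2) * (-1) ^ k)).tsum_eq
    rw [neg_pow, mul_pow, ← mul_assoc, mul_right_comm (hyp k), ← mul_assoc, ← fuss_half_eq,
      mul_right_comm, ← this]
    · exact tsum_congr fun n => by simp only [F]; ring
  have hR : ∀ n, ∑' k, F k n = Ring.choose (-(1 / 2) : ℝ) n * t ^ n := fun n => by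
    rw [tsum_eq_sum (s := range (n + 1)), ← sum_fuss_mul_coeff, sum_mul]
    intro k hk
    simp only [F, c, coeff_pow_eq_zero (show n < k by simpa using hk)]
    simp
  simp only [hL, hR] at hcomm
  rw [← (hasSum_choose ht ht1 _).tsum_eq]
  exact hcomm.symm

theorem sqrt_series_3F2_neg (p m n : ℕ) (hp : 0 < p) (hps : ¬ IsSquare p)
    (hm : 0 < m) (hn : 0 < n) (hpell : (n : ℤ) ^ 2 - p * m ^ 2 = 1)
    (hextra : 4 * (p : ℤ) ^ 3 * m ^ 6 > 27 * (p * m ^ 2 + 1) ^ 2) :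
    Summable (fun k : ℕ => shiftedFactorial (1/2) k * shiftedFactorial (1/6) k * shiftedFactorial (5/6) k / ((Nat.factorial k : ℝ) * shiftedFactorial (3/4) k * shiftedFactorial (5/4) k) * (-(27 * (p * m ^ 2 + 1) ^ 2 / (4 * p ^ 3 * m ^ 6)) : ℝ) ^ k) ∧
    Real.sqrt p = (n / m : ℝ) *
      ∑' k : ℕ, shiftedFactorial (1/2) k * shiftedFactorial (1/6) k * shiftedFactorial (5/6) k / ((Nat.factorial k : ℝ) * shiftedFactorial (3/4) k * shiftedFactorial (5/4) k) * (-(27 * (p * m ^ 2 + 1) ^ 2 / (4 * p ^ 3 * m ^ 6)) : ℝ) ^ k := by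
  have hp' : (0 : ℝ) < p := by exact_mod_cast hp
  have hm' : (0 : ℝ) < m := by exact_mod_cast hm
  have hn' : (0 : ℝ) < n := by exact_mod_cast hn
  have hpell' : (n : ℝ) ^ 2 = p * m ^ 2 + 1 := by
    have : (n : ℝ) ^ 2 - p * m ^ 2 = 1 := by exact_mod_cast hpell
    linarith
  have hextra' : 27 * ((p : ℝ) * m ^ 2 + 1) ^ 2 < 4 * p ^ 3 * m ^ 6 := by exact_mod_cast hextra
  -- the parameter `t = 1 / (p m²)` turns the argument of the series into `-27 t (1 + t)² / 4`
  obtain ⟨t, ht⟩ : ∃ t : ℝ, t = 1 / (p * m ^ 2) := ⟨_, rfl⟩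
  have ht0 : 0 ≤ t := by rw [ht]; positivity
  have harg : (27 * ((p : ℝ) * m ^ 2 + 1) ^ 2 / (4 * p ^ 3 * m ^ 6))
      = 27 / 4 * (t * (1 + t) ^ 2) := by
    rw [ht]
    field_simp
  have hlt : 27 / 4 * (t * (1 + t) ^ 2) < 1 := by
    rw [← harg, div_lt_one (by positivity)]
    exact hextra'
  have hpos : 0 ≤ 27 / 4 * (t * (1 + t) ^ 2) := by positivity
  rw [harg]
  refine ⟨summable_hyp (by rwa [abs_neg, abs_of_nonneg hpos]), ?_⟩
  have h1 : 1 + t = (n / (m * Real.sqrt p)) ^ 2 := by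
    rw [div_pow, mul_pow, Real.sq_sqrt hp'.le, hpell', ht]
    field_simp
  have hs : 0 < Real.sqrt p := Real.sqrt_pos.mpr hp'
  have h := tsum_hyp ht0 hlt
  unfold hyp at h
  rw [h, Real.rpow_neg (by positivity), ← Real.sqrt_eq_rpow, h1, Real.sqrt_sq (by positivity)]
  field_simp
end
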